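/- Let S_1, …, S_k be bounded linear operators on a complex Hilbert space H and let n ≥ 1 be an integer. Then ω( Σ_{i=1}^k S_i )^{2n} ≤ (k^{2n−1}/√2) · Σ_{i=1}^k ω( |S_i|^{2n} + i |S_i^*|^{2n} ). -/

import Mathlib

noncomputable section

open ContinuousLinearMap

variable {H : Type*} [NormedAddCommGroup H] [InnerProductSpace ℂ H] [CompleteSpace H]

/-- The numerical radius: `ω(T) := sup {|⟨T x, x⟩| : ‖x‖ = 1}`. -/
def nrad (T : H →L[ℂ] H) : ℝ :=
  sSup {c : ℝ | ∃ x : H, ‖x‖ = 1 ∧ c = ‖(inner ℂ (T x) x : ℂ)‖}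

/-- `R` is the absolute value `|X| = (X* X)^{1/2}` of `X`, i.e. the positive square root
of `X* X`. -/
def IsAbsOf (X R : H →L[ℂ] H) : Prop :=
  R.IsPositive ∧ R * R = adjoint X * X

/-!
Since `ω` is subadditive, the power mean inequality reduces the claim to `k = 1`. For a unit
vector `x`, the sequence `‖|X|ᵐ x‖` is log-convex in `m`, so
`|⟨X x, x⟩|²ⁿ ≤ ‖|X| x‖²ⁿ ≤ ‖|X|ⁿ x‖² = ⟨|X|²ⁿ x, x⟩`, and likewise with `X*` in place of `X`.
The two quadratic forms are, up to sign, the real and imaginary parts of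
`z = ⟨(|X|²ⁿ + i |X*|²ⁿ) x, x⟩`, and `|Re z| + |Im z| ≤ √2 |z|`.
-/

section LogConvexSequence

variable {R : Type*} [CommRing R] [LinearOrder R] [IsStrictOrderedRing R] {a : ℕ → R}

theorem mul_le_mul_succ_of_sq_le_mul (ha : ∀ m, 0 ≤ a m)
    (hsq : ∀ m, a (m + 1) ^ 2 ≤ a m * a (m + 2)) (m : ℕ) : a 1 * a m ≤ a 0 * a (m + 1) := by
  induction m with
  | zero => exact (mul_comm _ _).le
  | succ m ih =>
    obtain hzero | hpos := (ha (m + 1)).eq_or_lt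
    · rw [← hzero, mul_zero]
      exact mul_nonneg (ha 0) (ha _)
    · refine le_of_mul_le_mul_right ?_ hpos
      calc a 1 * a (m + 1) * a (m + 1) = a 1 * a (m + 1) ^ 2 := by ring
        _ ≤ a 1 * (a m * a (m + 2)) := mul_le_mul_of_nonneg_left (hsq m) (ha 1)
        _ = a 1 * a m * a (m + 2) := by ring
        _ ≤ a 0 * a (m + 1) * a (m + 2) := mul_le_mul_of_nonneg_right ih (ha _)
        _ = a 0 * a (m + 2) * a (m + 1) := by ring

theorem pow_mul_le_mul_pow_of_sq_le_mul (ha : ∀ m, 0 ≤ a m)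
    (hsq : ∀ m, a (m + 1) ^ 2 ≤ a m * a (m + 2)) (n : ℕ) : a 1 ^ n * a 0 ≤ a n * a 0 ^ n := by
  induction n with
  | zero => simp
  | succ n ih =>
    calc a 1 ^ (n + 1) * a 0 = a 1 * (a 1 ^ n * a 0) := by ring
      _ ≤ a 1 * (a n * a 0 ^ n) := mul_le_mul_of_nonneg_left ih (ha 1)
      _ = a 1 * a n * a 0 ^ n := by ring
      _ ≤ a 0 * a (n + 1) * a 0 ^ n :=
        mul_le_mul_of_nonneg_right (mul_le_mul_succ_of_sq_le_mul ha hsq n) (pow_nonneg (ha 0) n)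
      _ = a (n + 1) * a 0 ^ (n + 1) := by ring

end LogConvexSequence

section SymmetricOperator

variable {𝕜 E : Type*} [RCLike 𝕜] [NormedAddCommGroup E] [InnerProductSpace 𝕜 E]
  {T : E →ₗ[𝕜] E}

theorem norm_apply_sq_le_of_isSymmetric (hT : T.IsSymmetric) (x : E) :
    ‖T x‖ ^ 2 ≤ ‖x‖ * ‖T (T x)‖ := by
  calc ‖T x‖ ^ 2 = ‖inner 𝕜 (T x) (T x)‖ := by simp [sq]
    _ = ‖inner 𝕜 x (T (T x))‖ := by rw [hT x (T x)]
    _ ≤ ‖x‖ * ‖T (T x)‖ := norm_inner_le_norm _ _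

theorem norm_apply_pow_mul_norm_le_of_isSymmetric (hT : T.IsSymmetric) (n : ℕ) (x : E) :
    ‖T x‖ ^ n * ‖x‖ ≤ ‖(T ^ n) x‖ * ‖x‖ ^ n := by
  have hsq (m : ℕ) : ‖(T ^ (m + 1)) x‖ ^ 2 ≤ ‖(T ^ m) x‖ * ‖(T ^ (m + 2)) x‖ := by
    simpa only [pow_succ', Module.End.mul_apply] using
      norm_apply_sq_le_of_isSymmetric hT ((T ^ m) x)
  simpa using pow_mul_le_mul_pow_of_sq_le_mul (fun m => norm_nonneg ((T ^ m) x)) hsq n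

theorem reApplyInnerSelf_pow_two_mul_of_isSymmetric {T : E →L[𝕜] E}
    (hT : (T : E →ₗ[𝕜] E).IsSymmetric) (n : ℕ) (x : E) :
    (T ^ (2 * n)).reApplyInnerSelf x = ‖(T ^ n) x‖ ^ 2 := by
  have hpow : ((T ^ n : E →L[𝕜] E) : E →ₗ[𝕜] E).IsSymmetric := by
    rw [toLinearMap_pow]
    exact hT.pow n
  rw [reApplyInnerSelf_apply, two_mul, pow_add, mul_apply_eq_comp, hpow.apply_clm,
    inner_self_eq_norm_sq]

end SymmetricOperator

theorem re_sub_im_le_sqrt_two_mul_norm (z : ℂ) : z.re - z.im ≤ √2 * ‖z‖ := by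
  have hnorm : ‖1 + Complex.I‖ = √2 := by
    norm_num [Complex.norm_def, Complex.normSq_apply]
  calc z.re - z.im = ((1 + Complex.I) * z).re := by simp
    _ ≤ ‖(1 + Complex.I) * z‖ := Complex.re_le_norm _
    _ = √2 * ‖z‖ := by rw [norm_mul, hnorm]

section NumericalRadius

variable {E : Type*} [NormedAddCommGroup E] [InnerProductSpace ℂ E]

theorem norm_inner_apply_self_le_nrad (T : E →L[ℂ] E) {x : E} (hx : ‖x‖ = 1) :
    ‖inner ℂ (T x) x‖ ≤ nrad T := by
  refine le_csSup ⟨‖T‖, ?_⟩ ⟨x, hx, rfl⟩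
  rintro _ ⟨y, hy, rfl⟩
  calc ‖inner ℂ (T y) y‖ ≤ ‖T y‖ * ‖y‖ := norm_inner_le_norm _ _
    _ ≤ ‖T‖ := by simpa [hy] using T.le_opNorm y

theorem nrad_nonneg (T : E →L[ℂ] E) : 0 ≤ nrad T := by
  refine Real.sSup_nonneg ?_
  rintro _ ⟨x, -, rfl⟩
  exact norm_nonneg _

theorem nrad_le {T : E →L[ℂ] E} {C : ℝ} (hC : 0 ≤ C)
    (h : ∀ x : E, ‖x‖ = 1 → ‖inner ℂ (T x) x‖ ≤ C) : nrad T ≤ C := by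
  refine Real.sSup_le ?_ hC
  rintro _ ⟨x, hx, rfl⟩
  exact h x hx

theorem nrad_pow_le {T : E →L[ℂ] E} {m : ℕ} (hm : m ≠ 0) {C : ℝ} (hC : 0 ≤ C)
    (h : ∀ x : E, ‖x‖ = 1 → ‖inner ℂ (T x) x‖ ^ m ≤ C) : nrad T ^ m ≤ C := by
  have hroot : (C ^ (m⁻¹ : ℝ)) ^ m = C := Real.rpow_inv_natCast_pow hC hm
  have hroot_nonneg : 0 ≤ C ^ (m⁻¹ : ℝ) := Real.rpow_nonneg hC _
  rw [← hroot]
  refine pow_le_pow_left₀ (nrad_nonneg T) (nrad_le hroot_nonneg fun x hx => ?_) m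
  exact le_of_pow_le_pow_left₀ hm hroot_nonneg ((h x hx).trans_eq hroot.symm)

theorem nrad_sum_le {ι : Type*} (s : Finset ι) (T : ι → E →L[ℂ] E) :
    nrad (∑ i ∈ s, T i) ≤ ∑ i ∈ s, nrad (T i) := by
  refine nrad_le (Finset.sum_nonneg fun i _ => nrad_nonneg (T i)) fun x hx => ?_
  rw [sum_apply, sum_inner]
  exact norm_sum_le_of_le s fun i _ => norm_inner_apply_self_le_nrad (T i) hx

theorem nrad_sum_pow_succ_le {ι : Type*} (s : Finset ι) (T : ι → E →L[ℂ] E) (m : ℕ) :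
    nrad (∑ i ∈ s, T i) ^ (m + 1) ≤ (s.card : ℝ) ^ m * ∑ i ∈ s, nrad (T i) ^ (m + 1) :=
  (pow_le_pow_left₀ (nrad_nonneg _) (nrad_sum_le s T) _).trans
    (pow_sum_le_card_mul_sum_pow (fun i _ => nrad_nonneg (T i)) m)

theorem reApplyInnerSelf_add_le_sqrt_two_mul_nrad {A B : E →L[ℂ] E}
    (hA : (A : E →ₗ[ℂ] E).IsSymmetric) (hB : (B : E →ₗ[ℂ] E).IsSymmetric) {x : E}
    (hx : ‖x‖ = 1) :
    A.reApplyInnerSelf x + B.reApplyInnerSelf x ≤ √2 * nrad (A + Complex.I • B) := by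
  have hinner : inner ℂ ((A + Complex.I • B) x) x =
      (A.reApplyInnerSelf x : ℂ) - Complex.I * B.reApplyInnerSelf x := by
    have hA_real : (A.reApplyInnerSelf x : ℂ) = inner ℂ (A x) x := hA.coe_reApplyInnerSelf_apply x
    have hB_real : (B.reApplyInnerSelf x : ℂ) = inner ℂ (B x) x := hB.coe_reApplyInnerSelf_apply x
    rw [hA_real, hB_real, add_apply, smul_apply, inner_add_left, inner_smul_left, Complex.conj_I,
      neg_mul, sub_eq_add_neg]
  calc A.reApplyInnerSelf x + B.reApplyInnerSelf x
      = (inner ℂ ((A + Complex.I • B) x) x).re - (inner ℂ ((A + Complex.I • B) x) x).im := by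
        rw [hinner]
        simp
    _ ≤ √2 * ‖inner ℂ ((A + Complex.I • B) x) x‖ := re_sub_im_le_sqrt_two_mul_norm _
    _ ≤ √2 * nrad (A + Complex.I • B) := by
        gcongr
        exact norm_inner_apply_self_le_nrad _ hx

end NumericalRadius

theorem IsAbsOf.norm_apply {X R : H →L[ℂ] H} (h : IsAbsOf X R) (x : H) : ‖R x‖ = ‖X x‖ := by
  have hR : adjoint R = R := h.1.isSelfAdjoint.adjoint_eq
  have hmul : adjoint R ∘L R = adjoint X ∘L X := by
    rw [hR]
    exact h.2
  rw [apply_norm_eq_sqrt_inner_adjoint_left, hmul, ← apply_norm_eq_sqrt_inner_adjoint_left]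

theorem IsAbsOf.norm_inner_pow_le {X R : H →L[ℂ] H} (h : IsAbsOf X R) (n : ℕ) {x : H}
    (hx : ‖x‖ = 1) : ‖inner ℂ (X x) x‖ ^ (2 * n) ≤ (R ^ (2 * n)).reApplyInnerSelf x := by
  have hsymm : (R : H →ₗ[ℂ] H).IsSymmetric := h.1.isSymmetric
  calc ‖inner ℂ (X x) x‖ ^ (2 * n) ≤ ‖X x‖ ^ (2 * n) := by
        gcongr
        simpa [hx] using norm_inner_le_norm (𝕜 := ℂ) (X x) x
    _ = (‖R x‖ ^ n) ^ 2 := by rw [h.norm_apply, mul_comm, pow_mul]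
    _ ≤ ‖(R ^ n) x‖ ^ 2 := by
        gcongr
        simpa [hx, ← toLinearMap_pow] using norm_apply_pow_mul_norm_le_of_isSymmetric hsymm n x
    _ = (R ^ (2 * n)).reApplyInnerSelf x :=
        (reApplyInnerSelf_pow_two_mul_of_isSymmetric hsymm n x).symm

theorem IsAbsOf.nrad_pow_two_mul_le {X R Q : H →L[ℂ] H} (hR : IsAbsOf X R)
    (hQ : IsAbsOf (adjoint X) Q) {n : ℕ} (hn : n ≠ 0) :
    nrad X ^ (2 * n) ≤ nrad (R ^ (2 * n) + Complex.I • Q ^ (2 * n)) / √2 := by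
  refine nrad_pow_le (by positivity) (div_nonneg (nrad_nonneg _) (Real.sqrt_nonneg 2))
    fun x hx => ?_
  have hXR : ‖inner ℂ (X x) x‖ ^ (2 * n) ≤ (R ^ (2 * n)).reApplyInnerSelf x :=
    hR.norm_inner_pow_le n hx
  have hXQ : ‖inner ℂ (X x) x‖ ^ (2 * n) ≤ (Q ^ (2 * n)).reApplyInnerSelf x := by
    simpa only [adjoint_inner_left, norm_inner_symm] using hQ.norm_inner_pow_le n hx
  have hsum : (R ^ (2 * n)).reApplyInnerSelf x + (Q ^ (2 * n)).reApplyInnerSelf x ≤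
      √2 * nrad (R ^ (2 * n) + Complex.I • Q ^ (2 * n)) :=
    reApplyInnerSelf_add_le_sqrt_two_mul_nrad (hR.1.isSelfAdjoint.pow _).isSymmetric
      (hQ.1.isSelfAdjoint.pow _).isSymmetric hx
  calc ‖inner ℂ (X x) x‖ ^ (2 * n)
      ≤ nrad (R ^ (2 * n) + Complex.I • Q ^ (2 * n)) * (√2 / 2) := by linarith
    _ = nrad (R ^ (2 * n) + Complex.I • Q ^ (2 * n)) / √2 := by
        rw [Real.sqrt_div_self', mul_one_div]

theorem stmt19 (k : ℕ) (hk : 1 ≤ k) (n : ℕ) (hn : 1 ≤ n)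
    (S absS absSstar : Fin k → (H →L[ℂ] H))
    (habs : ∀ i, IsAbsOf (S i) (absS i))
    (habsStar : ∀ i, IsAbsOf (adjoint (S i)) (absSstar i)) :
    nrad (∑ i, S i) ^ (2 * n) ≤
      ((k : ℝ) ^ (2 * n - 1) / Real.sqrt 2) *
        ∑ i, nrad ((absS i) ^ (2 * n) + Complex.I • (absSstar i) ^ (2 * n)) := by
  have hpow : 2 * n - 1 + 1 = 2 * n := by omega
  calc nrad (∑ i, S i) ^ (2 * n)
      ≤ (k : ℝ) ^ (2 * n - 1) * ∑ i, nrad (S i) ^ (2 * n) := by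
        simpa only [hpow, Finset.card_univ, Fintype.card_fin] using
          nrad_sum_pow_succ_le Finset.univ S (2 * n - 1)
    _ ≤ (k : ℝ) ^ (2 * n - 1) *
        ∑ i, nrad ((absS i) ^ (2 * n) + Complex.I • (absSstar i) ^ (2 * n)) / √2 := by
        gcongr with i
        exact (habs i).nrad_pow_two_mul_le (habsStar i) (Nat.ne_of_gt hn)
    _ = ((k : ℝ) ^ (2 * n - 1) / Real.sqrt 2) *
        ∑ i, nrad ((absS i) ^ (2 * n) + Complex.I • (absSstar i) ^ (2 * n)) := by
        rw [← Finset.sum_div, mul_div_assoc', div_mul_eq_mul_div]
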